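/- There exist g₀ > 0 and K > 0, depending only on C₋ and C₊, such that if 0 < g_f ≤ g₀ then for all 0 ≤ j ≤ k ≤ N−1, Σ_{ℓ=j}^{k} β_ℓ·ḡ_ℓ ≤ K·|log ḡ_j|. -/

import Mathlib

noncomputable section

/-- The backward quadratic flow: `g N = gf` and, for `k < N`,
`g k` is the unique positive root of `β k * t ^ 2 + t - g (k + 1) = 0`. -/
def QuadFlow (β : ℕ → ℝ) (N : ℕ) (gf : ℝ) (g : ℕ → ℝ) : Prop :=
  g N = gf ∧ ∀ k, k < N → g k = (-1 + Real.sqrt (1 + 4 * β k * g (k + 1))) / (2 * β k)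

/-!
Read forwards, the recursion is `g (l + 1) = g l * (1 + β l * g l)`, so that
`log (g (l + 1)) - log (g l) = log (1 + x)` with `x = β l * g l`. Since the flow is positive and
increasing, `x` is at most the upper bound on `β` times `gf`, and `x ≤ (1 + x) * log (1 + x)` makes
the sum telescope into a difference of logarithms.
-/

theorem le_one_add_mul_log_one_add {x : ℝ} (hx : -1 ≤ x) : x ≤ (1 + x) * Real.log (1 + x) := by
  simpa only [add_sub_cancel_left] using
    Real.self_sub_one_le_mul_log (neg_le_iff_add_nonneg'.mp hx)

section QuadraticRoot

variable {b y : ℝ}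

theorem quadratic_root_pos (hb : 0 < b) (hy : 0 < y) :
    0 < (-1 + Real.sqrt (1 + 4 * b * y)) / (2 * b) := by
  have one_lt_sqrt : 1 < Real.sqrt (1 + 4 * b * y) :=
    Real.lt_sqrt_of_sq_lt (by linarith [mul_pos hb hy])
  exact div_pos (by linarith) (by positivity)

theorem quadratic_root_mul_one_add (hb : b ≠ 0) (hdisc : 0 ≤ 1 + 4 * b * y) {t : ℝ}
    (ht : t = (-1 + Real.sqrt (1 + 4 * b * y)) / (2 * b)) : t * (1 + b * t) = y := by
  have discrim_eq : discrim b 1 (-y) =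
      Real.sqrt (1 + 4 * b * y) * Real.sqrt (1 + 4 * b * y) := by
    rw [Real.mul_self_sqrt hdisc, discrim]
    ring
  have root_eq : b * (t * t) + 1 * t + -y = 0 :=
    (quadratic_eq_zero_iff hb discrim_eq t).mpr (Or.inl ht)
  linarith

end QuadraticRoot

namespace QuadFlow

variable {β g : ℕ → ℝ} {N : ℕ} {gf C : ℝ}

theorem pos (hg : QuadFlow β N gf g) (hβ : ∀ k < N, 0 < β k) (hgf : 0 < gf) {k : ℕ}
    (hk : k ≤ N) : 0 < g k := by
  induction hk using Nat.decreasingInduction with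
  | self => exact hg.1 ▸ hgf
  | of_succ k hk ih => exact hg.2 k hk ▸ quadratic_root_pos (hβ k hk) ih

theorem apply_succ (hg : QuadFlow β N gf g) (hβ : ∀ k < N, 0 < β k) (hgf : 0 < gf) {k : ℕ}
    (hk : k < N) : g (k + 1) = g k * (1 + β k * g k) := by
  have b_pos := hβ k hk
  have g_succ_pos := hg.pos hβ hgf (Nat.succ_le_of_lt hk)
  exact (quadratic_root_mul_one_add b_pos.ne' (by positivity) (hg.2 k hk)).symm

theorem le_apply_succ (hg : QuadFlow β N gf g) (hβ : ∀ k < N, 0 < β k) (hgf : 0 < gf) {k : ℕ}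
    (hk : k < N) : g k ≤ g (k + 1) := by
  have b_pos := hβ k hk
  have g_pos := hg.pos hβ hgf hk.le
  rw [hg.apply_succ hβ hgf hk]
  exact le_mul_of_one_le_right g_pos.le (le_add_of_nonneg_right (by positivity))

theorem le_final (hg : QuadFlow β N gf g) (hβ : ∀ k < N, 0 < β k) (hgf : 0 < gf) {k : ℕ}
    (hk : k ≤ N) : g k ≤ gf := by
  induction hk using Nat.decreasingInduction with
  | self => exact hg.1.le
  | of_succ k hk ih => exact (hg.le_apply_succ hβ hgf hk).trans ih

theorem log_apply_succ_sub_log (hg : QuadFlow β N gf g) (hβ : ∀ k < N, 0 < β k) (hgf : 0 < gf)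
    {k : ℕ} (hk : k < N) :
    Real.log (g (k + 1)) - Real.log (g k) = Real.log (1 + β k * g k) := by
  have b_pos := hβ k hk
  have g_pos := hg.pos hβ hgf hk.le
  rw [hg.apply_succ hβ hgf hk, Real.log_mul g_pos.ne' (by positivity), add_sub_cancel_left]

theorem mul_le_log_sub_log (hg : QuadFlow β N gf g) (hβ : ∀ k < N, 0 < β k) (hgf : 0 < gf)
    {k : ℕ} (hk : k < N) (hC : β k ≤ C) :
    β k * g k ≤ (1 + C * gf) * (Real.log (g (k + 1)) - Real.log (g k)) := by
  have b_pos := hβ k hk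
  have C_pos := b_pos.trans_le hC
  have g_pos := hg.pos hβ hgf hk.le
  have x_nonneg : 0 ≤ β k * g k := by positivity
  have log_nonneg : 0 ≤ Real.log (1 + β k * g k) := Real.log_nonneg (by linarith)
  rw [hg.log_apply_succ_sub_log hβ hgf hk]
  calc β k * g k ≤ (1 + β k * g k) * Real.log (1 + β k * g k) :=
        le_one_add_mul_log_one_add (by linarith)
    _ ≤ (1 + C * gf) * Real.log (1 + β k * g k) := by
        gcongr
        exact hg.le_final hβ hgf hk.le

theorem sum_mul_le_log_sub_log (hg : QuadFlow β N gf g) (hβ : ∀ k < N, 0 < β k ∧ β k ≤ C)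
    (hgf : 0 < gf) {j k : ℕ} (hjk : j ≤ k) (hk : k < N) :
    ∑ l ∈ Finset.Icc j k, β l * g l ≤
      (1 + C * gf) * (Real.log (g (k + 1)) - Real.log (g j)) := by
  calc ∑ l ∈ Finset.Icc j k, β l * g l
      ≤ ∑ l ∈ Finset.Icc j k, (1 + C * gf) * (Real.log (g (l + 1)) - Real.log (g l)) := by
        refine Finset.sum_le_sum fun l hl => ?_
        have l_lt : l < N := (Finset.mem_Icc.mp hl).2.trans_lt hk
        exact hg.mul_le_log_sub_log (fun i hi => (hβ i hi).1) hgf l_lt (hβ l l_lt).2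
    _ = (1 + C * gf) * (Real.log (g (k + 1)) - Real.log (g j)) := by
        rw [← Finset.mul_sum, Finset.sum_Icc_sub hjk (fun l => Real.log (g l))]

end QuadFlow

theorem stmt_2_general {β g : ℕ → ℝ} {N : ℕ} {gf C : ℝ} (hβ : ∀ k < N, 0 < β k ∧ β k ≤ C)
    (hgf : 0 < gf) (hgf_le : gf ≤ 1) (hg : QuadFlow β N gf g) {j k : ℕ} (hjk : j ≤ k)
    (hk : k < N) : ∑ l ∈ Finset.Icc j k, β l * g l ≤ (1 + C) * |Real.log (g j)| := by
  have β_pos : ∀ i < N, 0 < β i := fun i hi => (hβ i hi).1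
  have C_pos : 0 < C := (hβ k hk).1.trans_le (hβ k hk).2
  have log_nonpos : Real.log (g (k + 1)) ≤ 0 :=
    Real.log_nonpos (hg.pos β_pos hgf hk).le ((hg.le_final β_pos hgf hk).trans hgf_le)
  calc ∑ l ∈ Finset.Icc j k, β l * g l
      ≤ (1 + C * gf) * (Real.log (g (k + 1)) - Real.log (g j)) :=
        hg.sum_mul_le_log_sub_log hβ hgf hjk hk
    _ ≤ (1 + C * gf) * |Real.log (g j)| := by
        gcongr
        linarith [neg_le_abs (Real.log (g j))]
    _ ≤ (1 + C) * |Real.log (g j)| := by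
        gcongr
        exact mul_le_of_le_one_right C_pos.le hgf_le

theorem stmt_2 (Cm Cp : ℝ) (hCm : 0 < Cm) (hCmCp : Cm ≤ Cp) :
    ∃ g0 : ℝ, 0 < g0 ∧ ∃ K : ℝ, 0 < K ∧
      ∀ (N : ℕ), 1 ≤ N → ∀ β : ℕ → ℝ, (∀ k, k < N → Cm ≤ β k ∧ β k ≤ Cp) →
      ∀ gf : ℝ, 0 < gf → gf ≤ g0 →
      ∀ g : ℕ → ℝ, QuadFlow β N gf g →
      ∀ j k : ℕ, j ≤ k → k < N →
        ∑ l ∈ Finset.Icc j k, β l * g l ≤ K * |Real.log (g j)| :=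
  ⟨1, one_pos, 1 + Cp, by linarith, fun _ _ _ hβ _ hgf hgf_le _ hg _ _ hjk hk =>
    stmt_2_general (fun i hi => ⟨hCm.trans_le (hβ i hi).1, (hβ i hi).2⟩) hgf hgf_le hg hjk hk⟩
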